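/- Let n, t be natural numbers with n > 2·t, indexing a check committee, and let M ⊆ Fin n be the set of malicious committee members. Let g : Fin n → ℝ be arbitrary per-validator scores. Define the extreme scores f by f j = −1 for j ∈ M and f j = g j for j ∉ M, and let h : Fin n → ℝ be any other manipulated scores with h j ≥ −1 for j ∈ M and h j = g j for j ∉ M. Then the t-trimmed mean of f is less than or equal to the t-trimmed mean of h. In particular, for a benign client, the extreme check-score manipulation yields an aggregated check score no larger than under any other manipulation. -/

import Mathlib

/-- The `k`-th order statistic (0-indexed) of `x : Fin n → ℝ`: the `k`-th entry of
the list obtained by sorting the `n` values of `x` in ascending order. -/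
noncomputable def orderStat {n : ℕ} (x : Fin n → ℝ) (k : Fin n) : ℝ :=
  x (Tuple.sort x k)

/-- The `t`-trimmed mean of `x : Fin n → ℝ` (for `n > 2·t`): the average of the
entries that remain after sorting `x` in ascending order and discarding the
smallest `t` and the largest `t` entries. -/
noncomputable def trimmedMean {n : ℕ} (t : ℕ) (x : Fin n → ℝ) : ℝ :=
  (∑ k ∈ Finset.univ.filter (fun k : Fin n => t ≤ (k : ℕ) ∧ (k : ℕ) < n - t),
      orderStat x k) / ((n - 2 * t : ℕ) : ℝ)

/-!
With indices starting at `0`, the `k`-th order statistic of `x` is at most `a` exactly when more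
than `k` entries of `x` are at most `a`. Lowering the entries can only increase that count, so it
can only lower the order statistics, and with them the trimmed mean. Among all manipulations the
extreme one is entrywise the smallest.
-/

open Finset in
theorem lt_card_le_iff_apply_sort_le {n : ℕ} {α : Type*} [LinearOrder α] (x : Fin n → α)
    (k : Fin n) (a : α) : k < #{i | x i ≤ a} ↔ x (Tuple.sort x k) ≤ a := by
  have card_sorted : #{i | x (Tuple.sort x i) ≤ a} = #{i | x i ≤ a} :=
    card_equiv (Tuple.sort x) (by simp)
  rw [← card_sorted]
  exact Tuple.lt_card_le_iff_apply_le_of_monotone (Tuple.monotone_sort x)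

theorem apply_sort_mono {n : ℕ} {α : Type*} [LinearOrder α] (k : Fin n) :
    Monotone fun x : Fin n → α => x (Tuple.sort x k) := by
  intro x y hxy
  have lt_card_y := (lt_card_le_iff_apply_sort_le y k (y (Tuple.sort y k))).mpr le_rfl
  refine (lt_card_le_iff_apply_sort_le x k _).mp (lt_card_y.trans_le ?_)
  gcongr with i
  exact hxy i

theorem orderStat_mono {n : ℕ} (k : Fin n) : Monotone fun x : Fin n → ℝ => orderStat x k :=
  apply_sort_mono k

theorem trimmedMean_mono {n : ℕ} (t : ℕ) : Monotone (trimmedMean (n := n) t) := by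
  intro x y hxy
  unfold trimmedMean
  gcongr with k
  exact orderStat_mono k hxy

/-- **Optimality of the extreme manipulation for a benign client.**
Let `n > 2·t` index a check committee with malicious members `M ⊆ Fin n`, and let
`g` be arbitrary per-validator scores. The extreme scores `f` set `f j = -1` for
`j ∈ M` and `f j = g j` otherwise. For any other manipulated scores `h` with
`h j ≥ -1` for `j ∈ M` and `h j = g j` for `j ∉ M`, the `t`-trimmed mean of `f` is
at most the `t`-trimmed mean of `h`. -/
theorem extreme_manipulation_le_trimmedMean {n t : ℕ} (hn : 2 * t < n)
    (M : Finset (Fin n)) (g h : Fin n → ℝ)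
    (hM : ∀ j ∈ M, -1 ≤ h j) (hMc : ∀ j ∉ M, h j = g j) :
    trimmedMean t (fun j => if j ∈ M then (-1 : ℝ) else g j) ≤ trimmedMean t h := by
  refine trimmedMean_mono t fun j => ?_
  by_cases hj : j ∈ M
  · simpa only [if_pos hj] using hM j hj
  · simpa only [if_neg hj] using (hMc j hj).ge
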